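/- On ℝ³ with coordinates (u,v,x) (restricted to v > 0, x > 0), consider the Brinkmann metric g = dv(2du + F(u,v,x)dv) + dx² with F(u,v,x) = ((4uv − x²)log(vx) + x²)/(2v²). Then: (i) the Ricci operator satisfies Ric(∂_u) = 0, Ric(∂_v) = ((4uv + 2x²log(vx) + x²)/(4v²x²))∂_u + (1/(vx))∂_x, Ric(∂_x) = (1/(vx))∂_u, and is 3-step nilpotent; (ii) the function h(u,v,x) = vx satisfies the vacuum weighted Einstein field equation h·ρ − Hes_h + (Δh)g = 0 (i.e. with Λ = 0); (iii) ∇h = x∂_u + v∂_x, so ‖∇h‖² = v² and ∇h is spacelike. In particular there exist non-isotropic 3-dimensional Brinkmann wave solutions that are not pp-waves. -/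

import Mathlib

noncomputable section
open Matrix

/-- Points of the coordinate space `ℝⁿ`. -/
abbrev Pt (n : ℕ) := Fin n → ℝ

/-- Partial derivative `∂_i f` in the `i`-th coordinate direction. -/
def pd {n : ℕ} (i : Fin n) (f : Pt n → ℝ) (p : Pt n) : ℝ :=
  fderiv ℝ f p (Pi.single i 1)

/-- The inverse metric `g^{ij}` of a metric `g` given as a matrix of components. -/
def ginv {n : ℕ} (g : Pt n → Fin n → Fin n → ℝ) (p : Pt n) : Matrix (Fin n) (Fin n) ℝ :=
  (Matrix.of (g p))⁻¹

/-- Christoffel symbols `Γ^k_{ij}` of the Levi-Civita connection of `g`. -/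
def chr {n : ℕ} (g : Pt n → Fin n → Fin n → ℝ) (k i j : Fin n) (p : Pt n) : ℝ :=
  (1/2) * ∑ l, ginv g p k l *
    (pd i (fun q => g q l j) p + pd j (fun q => g q l i) p - pd l (fun q => g q i j) p)

/-- Components `R_{ij}` of the Ricci tensor of `g`. -/
def RicciT {n : ℕ} (g : Pt n → Fin n → Fin n → ℝ) (i j : Fin n) (p : Pt n) : ℝ :=
  (∑ k, pd k (fun q => chr g k i j q) p) - (∑ k, pd j (fun q => chr g k i k q) p)
  + (∑ k, ∑ l, chr g k k l p * chr g l i j p) - (∑ k, ∑ l, chr g k j l p * chr g l i k p)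

/-- Scalar curvature `τ = g^{ij} R_{ij}` of `g`. -/
def Scal {n : ℕ} (g : Pt n → Fin n → Fin n → ℝ) (p : Pt n) : ℝ :=
  ∑ i, ∑ j, ginv g p i j * RicciT g i j p

/-- Components of the Hessian `Hes_f` of a function `f` with respect to `g`. -/
def Hess {n : ℕ} (g : Pt n → Fin n → Fin n → ℝ) (f : Pt n → ℝ) (i j : Fin n) (p : Pt n) : ℝ :=
  pd i (fun q => pd j f q) p - ∑ k, chr g k i j p * pd k f p

/-- Laplacian `Δf = g^{ij}(Hes_f)_{ij}`. -/
def Lap {n : ℕ} (g : Pt n → Fin n → Fin n → ℝ) (f : Pt n → ℝ) (p : Pt n) : ℝ :=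
  ∑ i, ∑ j, ginv g p i j * Hess g f i j p

/-- Components of the gradient `∇f = g^{ij} ∂_j f ∂_i`. -/
def gradV {n : ℕ} (g : Pt n → Fin n → Fin n → ℝ) (f : Pt n → ℝ) (p : Pt n) (i : Fin n) : ℝ :=
  ∑ j, ginv g p i j * pd j f p

/-- `‖∇f‖² = g(∇f,∇f) = g^{ij} ∂_i f ∂_j f`. -/
def gradNorm2 {n : ℕ} (g : Pt n → Fin n → Fin n → ℝ) (f : Pt n → ℝ) (p : Pt n) : ℝ :=
  ∑ i, ∑ j, ginv g p i j * pd i f p * pd j f p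

/-- The vacuum weighted Einstein field equation
`h·ρ − Hes_h + (Δh + Λ)g = 0` at the point `p`. -/
def WEFEat {n : ℕ} (g : Pt n → Fin n → Fin n → ℝ) (h : Pt n → ℝ) (Λ : ℝ) (p : Pt n) : Prop :=
  ∀ i j, h p * RicciT g i j p - Hess g h i j p + (Lap g h p + Λ) * g p i j = 0

/-- The Ricci operator `Ric = g^{-1}·ρ` as a matrix (column `j` lists the
components of `Ric ∂_j`). -/
def RicOpM {n : ℕ} (g : Pt n → Fin n → Fin n → ℝ) (p : Pt n) : Matrix (Fin n) (Fin n) ℝ :=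
  Matrix.of fun i j => ∑ k, ginv g p i k * RicciT g k j p

/-- The `k`-th component of the covariant derivative `∇_{∂_i} V`. -/
def covD {n : ℕ} (g : Pt n → Fin n → Fin n → ℝ) (V : Pt n → Fin n → ℝ) (i k : Fin n)
    (p : Pt n) : ℝ :=
  pd i (fun q => V q k) p + ∑ m, chr g k i m p * V p m

/-- Components `R^l_{ijk}` of the (1,3)-curvature tensor:
`R(∂_i,∂_j)∂_k = R^l_{ijk} ∂_l`. -/
def RiemUp {n : ℕ} (g : Pt n → Fin n → Fin n → ℝ) (l i j k : Fin n) (p : Pt n) : ℝ :=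
  pd i (fun q => chr g l j k q) p - pd j (fun q => chr g l i k q) p
  + (∑ m, chr g l i m p * chr g m j k p) - (∑ m, chr g l j m p * chr g m i k p)

/-- The (0,4)-curvature tensor `R(∂_i,∂_j,∂_k,∂_l) = g(R(∂_i,∂_j)∂_k, ∂_l)`. -/
def RiemLow {n : ℕ} (g : Pt n → Fin n → Fin n → ℝ) (i j k l : Fin n) (p : Pt n) : ℝ :=
  ∑ m, g p l m * RiemUp g m i j k p

/-- A symmetric matrix of Lorentzian signature `(−,+,+)`. -/
def IsLorentz3 (A : Matrix (Fin 3) (Fin 3) ℝ) : Prop :=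
  A.IsSymm ∧ ∃ P : Matrix (Fin 3) (Fin 3) ℝ, IsUnit P.det ∧
    Pᵀ * A * P = Matrix.diagonal ![(-1 : ℝ), 1, 1]

/-- Jacobian matrix of a coordinate change `ψ`. -/
def jac {n : ℕ} (ψ : Pt n → Pt n) (q : Pt n) : Matrix (Fin n) (Fin n) ℝ :=
  Matrix.of fun i j => pd j (fun r => ψ r i) q

/-- Pullback `ψ^*g` of the metric `g` under the coordinate change `ψ`. -/
def pullback {n : ℕ} (g : Pt n → Fin n → Fin n → ℝ) (ψ : Pt n → Pt n) (q : Pt n) :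
    Matrix (Fin n) (Fin n) ℝ :=
  (jac ψ q)ᵀ * Matrix.of (g (ψ q)) * jac ψ q

/-- The 3-dimensional plane-wave metric `dv(2du − (α''(v)/α(v))x² dv) + dx²`
in coordinates `(u,v,x) = (q 0, q 1, q 2)`. -/
def planeWaveM (α : ℝ → ℝ) (q : Pt 3) : Matrix (Fin 3) (Fin 3) ℝ :=
  Matrix.of fun i j =>
    if i = 0 ∧ j = 1 then 1 else if i = 1 ∧ j = 0 then 1
    else if i = 1 ∧ j = 1 then -(deriv (deriv α) (q 1) / α (q 1)) * (q 2)^2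
    else if i = 2 ∧ j = 2 then 1 else 0


/-- The 3-dimensional Brinkmann metric `dv(2du + F(u,v,x)dv) + dx²` in
coordinates `(u,v,x) = (p 0, p 1, p 2)`. -/
def brinkM (F : Pt 3 → ℝ) (p : Pt 3) : Fin 3 → Fin 3 → ℝ := fun i j =>
  if i = 0 ∧ j = 1 then 1 else if i = 1 ∧ j = 0 then 1
  else if i = 1 ∧ j = 1 then F p
  else if i = 2 ∧ j = 2 then 1 else 0

/-- The function `F(u,v,x) = ((4uv − x²)log(vx) + x²)/(2v²)` of
Example 4.2. -/
def exF18 (p : Pt 3) : ℝ :=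
  ((4 * p 0 * p 1 - (p 2)^2) * Real.log (p 1 * p 2) + (p 2)^2) / (2 * (p 1)^2)

/-!
For a Brinkmann metric with arbitrary `F` of class `C²`, write subscripts for partial derivatives.
In the basis `∂_u, ∂_x, ∂_v` the Ricci operator is upper triangular, with diagonal
`(F_uu / 2, 0, F_uu / 2)` and superdiagonal `(F_ux / 2, F_ux / 2)`, so it is 3-step nilpotent
as soon as `F_uu = 0 ≠ F_ux`. For a density `h` with `h_u = 0`, the field equation
reduces to `Λ = 0` and

  `h F_uu + 2 h_xx = 0`, `h F_ux = 2 h_vx`, `h F_xx + F_u h_v + F_x h_x + 2 h_vv = 0`.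

No derivative of `F` in the direction `v` survives, because the mixed terms `F_uv` cancel by
symmetry of second derivatives. For the example this leaves an elementary check with
`F_u = 2 log (vx) / v` and `F_x = (4uv / x - 2x log (vx) + x) / (2v²)`.
-/

open Filter Topology

theorem hasDerivAt_log_const_mul {c t : ℝ} (hc : c ≠ 0) (ht : t ≠ 0) :
    HasDerivAt (fun s => Real.log (c * s)) (1 / t) t := by
  refine (((hasDerivAt_id' t).const_mul c).log (mul_ne_zero hc ht)).congr_deriv ?_
  field_simp

theorem differentiableAt_fderiv_of_contDiffAt_two {E G : Type*} [NormedAddCommGroup E]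
    [NormedSpace ℝ E] [NormedAddCommGroup G] [NormedSpace ℝ G] {f : E → G} {p : E}
    (hf : ContDiffAt ℝ 2 f p) : DifferentiableAt ℝ (fderiv ℝ f) p :=
  (hf.fderiv_right (m := 1) le_rfl).differentiableAt one_ne_zero

section PartialDerivatives

variable {n : ℕ} {i j : Fin n} {f g : Pt n → ℝ} {p : Pt n}

theorem pd_const (i : Fin n) (c : ℝ) (p : Pt n) : pd i (fun _ => c) p = 0 := by
  simp [pd]

theorem pd_apply (i j : Fin n) (p : Pt n) :
    pd i (fun q => q j) p = if i = j then 1 else 0 := by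
  simp [pd, (hasFDerivAt_apply j p).fderiv, Pi.single_apply, eq_comm]

theorem pd_neg (i : Fin n) (f : Pt n → ℝ) (p : Pt n) : pd i (fun q => -f q) p = -pd i f p := by
  simp [pd]

theorem pd_add (hf : DifferentiableAt ℝ f p) (hg : DifferentiableAt ℝ g p) :
    pd i (fun q => f q + g q) p = pd i f p + pd i g p := by
  simp [pd, fderiv_fun_add hf hg]

theorem pd_mul (hf : DifferentiableAt ℝ f p) (hg : DifferentiableAt ℝ g p) :
    pd i (fun q => f q * g q) p = f p * pd i g p + g p * pd i f p := by
  simp [pd, fderiv_fun_mul hf hg]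

theorem pd_div_const (hf : DifferentiableAt ℝ f p) (c : ℝ) :
    pd i (fun q => f q / c) p = pd i f p / c := by
  simp [pd, div_eq_inv_mul, fderiv_const_mul hf]

theorem pd_congr (h : f =ᶠ[𝓝 p] g) : pd i f p = pd i g p := by
  rw [pd, pd, h.fderiv_eq]

theorem pd_eq_of_hasDerivAt_update {d : ℝ} (hf : DifferentiableAt ℝ f p)
    (hd : HasDerivAt (fun t => f (Function.update p i t)) d (p i)) : pd i f p = d := by
  have hf' : HasFDerivAt f (fderiv ℝ f p) (Function.update p i (p i)) := by
    simpa using hf.hasFDerivAt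
  exact (hf'.comp_hasDerivAt (p i) (hasDerivAt_update p i (p i))).unique hd

theorem differentiableAt_pd (hf : ContDiffAt ℝ 2 f p) (i : Fin n) :
    DifferentiableAt ℝ (pd i f) p :=
  (differentiableAt_fderiv_of_contDiffAt_two hf).clm_apply (differentiableAt_const _)

theorem pd_comm (hf : ContDiffAt ℝ 2 f p) (i j : Fin n) :
    pd i (pd j f) p = pd j (pd i f) p := by
  have hf' := differentiableAt_fderiv_of_contDiffAt_two hf
  have pd_pd (k l : Fin n) :
      pd k (pd l f) p = fderiv ℝ (fderiv ℝ f) p (Pi.single k 1) (Pi.single l 1) := by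
    change fderiv ℝ (fun q => fderiv ℝ f q (Pi.single l 1)) p _ = _
    simp [fderiv_clm_apply hf' (differentiableAt_const _)]
  rw [pd_pd, pd_pd, (hf.isSymmSndFDerivAt (by simp)).eq]

theorem pd_pd_eq_of_hasDerivAt_update {d : ℝ} (hf : ContDiffAt ℝ 2 f p) (hg : pd j f =ᶠ[𝓝 p] g)
    (hd : HasDerivAt (fun t => g (Function.update p i t)) d (p i)) : pd i (pd j f) p = d := by
  rw [pd_congr hg]
  exact pd_eq_of_hasDerivAt_update (hg.differentiableAt_iff.mp (differentiableAt_pd hf j)) hd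

theorem pd_apply_mul_apply (i j k : Fin n) :
    pd i (fun q => q j * q k) =
      fun q => (if i = j then q k else 0) + if i = k then q j else 0 := by
  funext q
  rw [pd_mul (differentiableAt_apply j q) (differentiableAt_apply k q), pd_apply, pd_apply]
  simp [add_comm]

end PartialDerivatives

section BrinkmannMetric

variable {F h : Pt 3 → ℝ} {p : Pt 3}

theorem ginv_brinkM (F : Pt 3 → ℝ) (p : Pt 3) :
    ginv (brinkM F) p = !![-F p, 1, 0; 1, 0, 0; 0, 0, 1] := by
  refine Matrix.inv_eq_right_inv ?_
  ext i j
  fin_cases i <;> fin_cases j <;> simp [Matrix.mul_apply, Fin.sum_univ_three, brinkM]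

theorem chr_brinkM (F : Pt 3 → ℝ) (k i j : Fin 3) (p : Pt 3) :
    chr (brinkM F) k i j p =
      (![!![0, pd 0 F p / 2, 0;
            pd 0 F p / 2, (F p * pd 0 F p + pd 1 F p) / 2, pd 2 F p / 2;
            0, pd 2 F p / 2, 0],
         !![0, 0, 0; 0, -(pd 0 F p / 2), 0; 0, 0, 0],
         !![0, 0, 0; 0, -(pd 2 F p / 2), 0; 0, 0, 0]] :
        Fin 3 → Matrix (Fin 3) (Fin 3) ℝ) k i j := by
  rw [chr, ginv_brinkM]
  fin_cases k <;> fin_cases i <;> fin_cases j <;>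
    simp [Fin.sum_univ_three, brinkM, pd_const] <;> ring

theorem RicciT_brinkM (hF : ContDiffAt ℝ 2 F p) (i j : Fin 3) :
    RicciT (brinkM F) i j p =
      !![0, pd 0 (pd 0 F) p / 2, 0;
         pd 0 (pd 0 F) p / 2, (F p * pd 0 (pd 0 F) p - pd 2 (pd 2 F) p) / 2,
           pd 0 (pd 2 F) p / 2;
         0, pd 0 (pd 2 F) p / 2, 0] i j := by
  have dF : DifferentiableAt ℝ F p := hF.differentiableAt two_ne_zero
  have dpd := differentiableAt_pd hF
  have pd_half (k l : Fin 3) : pd k (fun q => pd l F q / 2) p = pd k (pd l F) p / 2 :=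
    pd_div_const (dpd l) 2
  have pd_chr (k : Fin 3) : pd k (fun q => (F q * pd 0 F q + pd 1 F q) / 2) p =
      (F p * pd k (pd 0 F) p + pd 0 F p * pd k F p + pd k (pd 1 F) p) / 2 := by
    rw [pd_div_const ((dF.fun_mul (dpd 0)).fun_add (dpd 1)), pd_add (dF.fun_mul (dpd 0)) (dpd 1),
      pd_mul dF (dpd 0)]
  simp only [RicciT, chr_brinkM, Fin.sum_univ_three]
  fin_cases i <;> fin_cases j <;>
    simp [pd_const, pd_neg, pd_half, pd_chr, pd_comm hF 1 0]
  ring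

theorem RicOpM_brinkM (hF : ContDiffAt ℝ 2 F p) :
    RicOpM (brinkM F) p =
      !![pd 0 (pd 0 F) p / 2, -(pd 2 (pd 2 F) p / 2), pd 0 (pd 2 F) p / 2;
         0, pd 0 (pd 0 F) p / 2, 0;
         0, pd 0 (pd 2 F) p / 2, 0] := by
  ext i j
  simp only [RicOpM, RicciT_brinkM hF, ginv_brinkM, Fin.sum_univ_three]
  fin_cases i <;> fin_cases j <;> simp
  ring

theorem RicOpM_brinkM_sq (hF : ContDiffAt ℝ 2 F p) (huu : pd 0 (pd 0 F) p = 0) :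
    RicOpM (brinkM F) p ^ 2 = Matrix.single 0 1 ((pd 0 (pd 2 F) p / 2) ^ 2) := by
  ext i j
  fin_cases i <;> fin_cases j <;>
    simp [RicOpM_brinkM hF, huu, sq, Matrix.mul_apply, Fin.sum_univ_three, Matrix.single]

theorem RicOpM_brinkM_sq_ne_zero (hF : ContDiffAt ℝ 2 F p) (huu : pd 0 (pd 0 F) p = 0)
    (hux : pd 0 (pd 2 F) p ≠ 0) : RicOpM (brinkM F) p ^ 2 ≠ 0 := by
  rw [RicOpM_brinkM_sq hF huu]
  intro h
  exact hux (by simpa using congrFun₂ h 0 1)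

theorem RicOpM_brinkM_pow_three (hF : ContDiffAt ℝ 2 F p) (huu : pd 0 (pd 0 F) p = 0) :
    RicOpM (brinkM F) p ^ 3 = 0 := by
  rw [pow_succ, RicOpM_brinkM_sq hF huu, RicOpM_brinkM hF, huu]
  ext i j
  fin_cases i <;> fin_cases j <;> simp [Matrix.mul_apply, Matrix.single]

theorem gradV_brinkM (F f : Pt 3 → ℝ) (p : Pt 3) :
    gradV (brinkM F) f p = ![pd 1 f p - F p * pd 0 f p, pd 0 f p, pd 2 f p] := by
  funext i
  fin_cases i <;> simp [gradV, ginv_brinkM, Fin.sum_univ_three]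
  ring

theorem gradNorm2_brinkM (F f : Pt 3 → ℝ) (p : Pt 3) :
    gradNorm2 (brinkM F) f p = 2 * pd 0 f p * pd 1 f p - F p * pd 0 f p ^ 2 + pd 2 f p ^ 2 := by
  simp [gradNorm2, ginv_brinkM, Fin.sum_univ_three]
  ring

theorem Hess_brinkM_of_pd_zero_eq_zero (F : Pt 3 → ℝ) (hh : ContDiffAt ℝ 2 h p)
    (hu : pd 0 h =ᶠ[𝓝 p] 0) (i j : Fin 3) :
    Hess (brinkM F) h i j p =
      !![0, 0, 0;
         0, pd 1 (pd 1 h) p + (pd 0 F p * pd 1 h p + pd 2 F p * pd 2 h p) / 2, pd 1 (pd 2 h) p;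
         0, pd 1 (pd 2 h) p, pd 2 (pd 2 h) p] i j := by
  have pd_pd_zero (k : Fin 3) : pd k (pd 0 h) p = 0 := (pd_congr hu).trans (pd_const k 0 p)
  have hu' : pd 0 h p = 0 := hu.self_of_nhds
  simp only [Hess, chr_brinkM, Fin.sum_univ_three, hu']
  fin_cases i <;> fin_cases j <;>
    simp [pd_pd_zero, pd_comm hh 0 1, pd_comm hh 0 2, pd_comm hh 2 1]
  ring

theorem Lap_brinkM_of_pd_zero_eq_zero (F : Pt 3 → ℝ) (hh : ContDiffAt ℝ 2 h p)
    (hu : pd 0 h =ᶠ[𝓝 p] 0) : Lap (brinkM F) h p = pd 2 (pd 2 h) p := by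
  simp [Lap, Hess_brinkM_of_pd_zero_eq_zero F hh hu, ginv_brinkM, Fin.sum_univ_three]

theorem WEFEat_brinkM_iff_of_pd_zero_eq_zero (hF : ContDiffAt ℝ 2 F p) (hh : ContDiffAt ℝ 2 h p)
    (hu : pd 0 h =ᶠ[𝓝 p] 0) (Λ : ℝ) :
    WEFEat (brinkM F) h Λ p ↔
      Λ = 0 ∧ h p * pd 0 (pd 0 F) p + 2 * pd 2 (pd 2 h) p = 0 ∧
      h p * pd 0 (pd 2 F) p = 2 * pd 1 (pd 2 h) p ∧
      h p * pd 2 (pd 2 F) p + pd 0 F p * pd 1 h p + pd 2 F p * pd 2 h p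
        + 2 * pd 1 (pd 1 h) p = 0 := by
  set E₀₁ := (h p * pd 0 (pd 0 F) p + 2 * pd 2 (pd 2 h) p) / 2 + Λ with hE₀₁
  set E₁₂ := h p * pd 0 (pd 2 F) p / 2 - pd 1 (pd 2 h) p with hE₁₂
  set Q := h p * pd 2 (pd 2 F) p + pd 0 F p * pd 1 h p + pd 2 F p * pd 2 h p
    + 2 * pd 1 (pd 1 h) p with hQ
  have field_eq (i j : Fin 3) :
      h p * RicciT (brinkM F) i j p - Hess (brinkM F) h i j p
        + (Lap (brinkM F) h p + Λ) * brinkM F p i j =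
      !![0, E₀₁, 0; E₀₁, F p * E₀₁ - Q / 2, E₁₂; 0, E₁₂, Λ] i j := by
    rw [RicciT_brinkM hF, Hess_brinkM_of_pd_zero_eq_zero F hh hu,
      Lap_brinkM_of_pd_zero_eq_zero F hh hu]
    fin_cases i <;> fin_cases j <;> simp [brinkM, hE₀₁, hE₁₂, hQ] <;> ring
  simp only [WEFEat, field_eq]
  constructor
  · intro hE
    have h₂₂ : Λ = 0 := hE 2 2
    have h₀₁ : E₀₁ = 0 := hE 0 1
    have h₁₂ : E₁₂ = 0 := hE 1 2
    have h₁₁ : F p * E₀₁ - Q / 2 = 0 := hE 1 1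
    refine ⟨h₂₂, ?_, ?_, ?_⟩
    · linear_combination 2 * h₀₁ - 2 * h₂₂
    · linear_combination 2 * h₁₂
    · linear_combination -2 * h₁₁ + 2 * F p * h₀₁
  · rintro ⟨hΛ, huu, hux, hQ₀⟩ i j
    have h₀₁ : E₀₁ = 0 := by linear_combination huu / 2 + hΛ
    have h₁₂ : E₁₂ = 0 := by linear_combination hux / 2
    fin_cases i <;> fin_cases j <;> simp [h₀₁, h₁₂, hQ₀, hΛ]

end BrinkmannMetric

section Example

variable {p : Pt 3}

theorem eventually_apply_one_two_ne_zero (hv : p 1 ≠ 0) (hx : p 2 ≠ 0) :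
    ∀ᶠ q : Pt 3 in 𝓝 p, q 1 ≠ 0 ∧ q 2 ≠ 0 :=
  ((continuous_apply 1).continuousAt.eventually_ne hv).and
    ((continuous_apply 2).continuousAt.eventually_ne hx)

theorem contDiffAt_exF18 (hv : p 1 ≠ 0) (hx : p 2 ≠ 0) : ContDiffAt ℝ 2 exF18 p := by
  have hvx : p 1 * p 2 ≠ 0 := mul_ne_zero hv hx
  have hv2 : 2 * p 1 ^ 2 ≠ 0 := by positivity
  unfold exF18
  fun_prop (disch := assumption)

theorem pd_zero_exF18 (hv : p 1 ≠ 0) (hx : p 2 ≠ 0) :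
    pd 0 exF18 p = 2 * Real.log (p 1 * p 2) / p 1 := by
  have hd : HasDerivAt
      (fun u => ((4 * u * p 1 - p 2 ^ 2) * Real.log (p 1 * p 2) + p 2 ^ 2) / (2 * p 1 ^ 2))
      (2 * Real.log (p 1 * p 2) / p 1) (p 0) := by
    refine (((((((hasDerivAt_id' (p 0)).const_mul 4).mul_const (p 1)).sub_const _).mul_const
      _).add_const _).div_const _).congr_deriv ?_
    field_simp
    ring
  exact pd_eq_of_hasDerivAt_update ((contDiffAt_exF18 hv hx).differentiableAt two_ne_zero)
    (by simpa [exF18] using hd)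

theorem pd_two_exF18 (hv : p 1 ≠ 0) (hx : p 2 ≠ 0) :
    pd 2 exF18 p =
      (4 * p 0 * p 1 / p 2 - 2 * p 2 * Real.log (p 1 * p 2) + p 2) / (2 * p 1 ^ 2) := by
  have hd : HasDerivAt
      (fun x => ((4 * p 0 * p 1 - x ^ 2) * Real.log (p 1 * x) + x ^ 2) / (2 * p 1 ^ 2))
      ((4 * p 0 * p 1 / p 2 - 2 * p 2 * Real.log (p 1 * p 2) + p 2) / (2 * p 1 ^ 2)) (p 2) := by
    refine (((((hasDerivAt_pow 2 (p 2)).const_sub _).mul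
      (hasDerivAt_log_const_mul hv hx)).add (hasDerivAt_pow 2 (p 2))).div_const _).congr_deriv ?_
    field_simp
    ring
  exact pd_eq_of_hasDerivAt_update ((contDiffAt_exF18 hv hx).differentiableAt two_ne_zero)
    (by simpa [exF18] using hd)

theorem pd_zero_pd_zero_exF18 (hv : p 1 ≠ 0) (hx : p 2 ≠ 0) : pd 0 (pd 0 exF18) p = 0 := by
  refine pd_pd_eq_of_hasDerivAt_update (contDiffAt_exF18 hv hx)
    ((eventually_apply_one_two_ne_zero hv hx).mono fun q hq => pd_zero_exF18 hq.1 hq.2) ?_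
  simpa using hasDerivAt_const (p 0) (2 * Real.log (p 1 * p 2) / p 1)

theorem pd_zero_pd_two_exF18 (hv : p 1 ≠ 0) (hx : p 2 ≠ 0) :
    pd 0 (pd 2 exF18) p = 2 / (p 1 * p 2) := by
  have hd : HasDerivAt (fun x => 2 * Real.log (p 1 * x) / p 1) (2 / (p 1 * p 2)) (p 2) := by
    refine (((hasDerivAt_log_const_mul hv hx).const_mul 2).div_const (p 1)).congr_deriv ?_
    field_simp
  rw [pd_comm (contDiffAt_exF18 hv hx)]
  exact pd_pd_eq_of_hasDerivAt_update (contDiffAt_exF18 hv hx)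
    ((eventually_apply_one_two_ne_zero hv hx).mono fun q hq => pd_zero_exF18 hq.1 hq.2)
    (by simpa using hd)

theorem pd_two_pd_two_exF18 (hv : p 1 ≠ 0) (hx : p 2 ≠ 0) :
    pd 2 (pd 2 exF18) p =
      -((4 * p 0 * p 1 + 2 * p 2 ^ 2 * Real.log (p 1 * p 2) + p 2 ^ 2) /
        (2 * p 1 ^ 2 * p 2 ^ 2)) := by
  have hd : HasDerivAt
      (fun x => (4 * p 0 * p 1 / x - 2 * x * Real.log (p 1 * x) + x) / (2 * p 1 ^ 2))
      (-((4 * p 0 * p 1 + 2 * p 2 ^ 2 * Real.log (p 1 * p 2) + p 2 ^ 2) /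
        (2 * p 1 ^ 2 * p 2 ^ 2))) (p 2) := by
    have hid := hasDerivAt_id' (p 2)
    refine ((((((hasDerivAt_const (p 2) (4 * p 0 * p 1)).div hid hx).sub
      ((hid.const_mul 2).mul (hasDerivAt_log_const_mul hv hx))).add hid).div_const _)).congr_deriv
      ?_
    field_simp
    ring
  exact pd_pd_eq_of_hasDerivAt_update (contDiffAt_exF18 hv hx)
    ((eventually_apply_one_two_ne_zero hv hx).mono fun q hq => pd_two_exF18 hq.1 hq.2)
    (by simpa using hd)

theorem RicOpM_brinkM_exF18 (hv : p 1 ≠ 0) (hx : p 2 ≠ 0) :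
    RicOpM (brinkM exF18) p =
      !![0, (4 * p 0 * p 1 + 2 * p 2 ^ 2 * Real.log (p 1 * p 2) + p 2 ^ 2) /
              (4 * p 1 ^ 2 * p 2 ^ 2), 1 / (p 1 * p 2);
         0, 0, 0;
         0, 1 / (p 1 * p 2), 0] := by
  rw [RicOpM_brinkM (contDiffAt_exF18 hv hx), pd_zero_pd_zero_exF18 hv hx,
    pd_zero_pd_two_exF18 hv hx, pd_two_pd_two_exF18 hv hx]
  ext i j
  fin_cases i <;> fin_cases j <;> simp <;> ring

theorem WEFEat_brinkM_exF18 (hv : p 1 ≠ 0) (hx : p 2 ≠ 0) :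
    WEFEat (brinkM exF18) (fun q => q 1 * q 2) 0 p := by
  have hu : pd 0 (fun q : Pt 3 => q 1 * q 2) =ᶠ[𝓝 p] 0 := by
    simp [pd_apply_mul_apply, EventuallyEq]
  rw [WEFEat_brinkM_iff_of_pd_zero_eq_zero (contDiffAt_exF18 hv hx) (by fun_prop) hu,
    pd_zero_exF18 hv hx, pd_two_exF18 hv hx, pd_zero_pd_zero_exF18 hv hx,
    pd_zero_pd_two_exF18 hv hx, pd_two_pd_two_exF18 hv hx]
  refine ⟨rfl, ?_, ?_, ?_⟩
  · simp [pd_apply_mul_apply, pd_apply]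
  · simp [pd_apply_mul_apply, pd_apply]
    field_simp
  · simp [pd_apply_mul_apply, pd_apply]
    field_simp
    ring

end Example

theorem brinkmann_not_ppwave_solution_general :
    ∀ p : Pt 3, 0 < p 1 * p 2 →
      RicOpM (brinkM exF18) p =
        (Matrix.of fun i j =>
          if j = 1 ∧ i = 0 then
            (4 * p 0 * p 1 + 2 * (p 2)^2 * Real.log (p 1 * p 2) + (p 2)^2) /
              (4 * (p 1)^2 * (p 2)^2)
          else if j = 1 ∧ i = 2 then 1 / (p 1 * p 2)
          else if j = 2 ∧ i = 0 then 1 / (p 1 * p 2) else 0) ∧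
      RicOpM (brinkM exF18) p ^ 2 ≠ 0 ∧
      RicOpM (brinkM exF18) p ^ 3 = 0 ∧
      WEFEat (brinkM exF18) (fun q => q 1 * q 2) 0 p ∧
      gradV (brinkM exF18) (fun q => q 1 * q 2) p =
        (fun i => if i = 0 then p 2 else if i = 2 then p 1 else 0) ∧
      gradNorm2 (brinkM exF18) (fun q => q 1 * q 2) p = (p 1)^2 ∧
      0 < gradNorm2 (brinkM exF18) (fun q => q 1 * q 2) p := by
  intro p hvx
  obtain ⟨hv, hx⟩ := mul_ne_zero_iff.mp hvx.ne'
  have grad_norm : gradNorm2 (brinkM exF18) (fun q => q 1 * q 2) p = p 1 ^ 2 := by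
    simp [gradNorm2_brinkM, pd_apply_mul_apply]
  have hF := contDiffAt_exF18 hv hx
  have huu := pd_zero_pd_zero_exF18 hv hx
  have hux : pd 0 (pd 2 exF18) p ≠ 0 := by
    rw [pd_zero_pd_two_exF18 hv hx]
    positivity
  refine ⟨?_, RicOpM_brinkM_sq_ne_zero hF huu hux, RicOpM_brinkM_pow_three hF huu,
    WEFEat_brinkM_exF18 hv hx, ?_, grad_norm, grad_norm ▸ by positivity⟩
  · rw [RicOpM_brinkM_exF18 hv hx]
    ext i j
    fin_cases i <;> fin_cases j <;> simp
  · rw [gradV_brinkM]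
    funext i
    fin_cases i <;> simp [pd_apply_mul_apply]

/-- On `{v > 0, x > 0}`, for the Brinkmann metric with `F` as
in `exF18`: (i) the Ricci operator is as displayed and is 3-step nilpotent;
(ii) `h = vx` satisfies the vacuum weighted Einstein field equation with
`Λ = 0`; (iii) `∇h = x∂_u + v∂_x`, `‖∇h‖² = v²` and `∇h` is spacelike.
In particular there are non-isotropic 3-dimensional Brinkmann-wave solutions
which are not pp-waves. -/
theorem brinkmann_not_ppwave_solution :
    ∀ p : Pt 3, 0 < p 1 → 0 < p 2 →
      RicOpM (brinkM exF18) p =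
        (Matrix.of fun i j =>
          if j = 1 ∧ i = 0 then
            (4 * p 0 * p 1 + 2 * (p 2)^2 * Real.log (p 1 * p 2) + (p 2)^2) /
              (4 * (p 1)^2 * (p 2)^2)
          else if j = 1 ∧ i = 2 then 1 / (p 1 * p 2)
          else if j = 2 ∧ i = 0 then 1 / (p 1 * p 2) else 0) ∧
      RicOpM (brinkM exF18) p ^ 2 ≠ 0 ∧
      RicOpM (brinkM exF18) p ^ 3 = 0 ∧
      WEFEat (brinkM exF18) (fun q => q 1 * q 2) 0 p ∧
      gradV (brinkM exF18) (fun q => q 1 * q 2) p =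
        (fun i => if i = 0 then p 2 else if i = 2 then p 1 else 0) ∧
      gradNorm2 (brinkM exF18) (fun q => q 1 * q 2) p = (p 1)^2 ∧
      0 < gradNorm2 (brinkM exF18) (fun q => q 1 * q 2) p :=
  fun p hv hx => brinkmann_not_ppwave_solution_general p (mul_pos hv hx)
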